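/- For every positive integer k and every finite set U_M ⊂ U(4) that is closed under taking inverses and whose elements have only entries algebraic over ℚ, there exists a choice of a finite set U_{B/M} ⊂ U(4) (with U_B = U_M ∪ U_{B/M} a partially invertible universal set) such that the relaxed seed U^k = U_{B^k} ∖ U_{M^k} satisfies: (a) U^k contains a unitary having at least one matrix entry that is not algebraic over ℚ, and (b) no element of U^k has its inverse in U^k (i.e., for all U, U' ∈ U^k, U' ≠ U†). -/

import Mathlib

open Matrix
open scoped Classical

noncomputable section

/-- The set of all products `f 0 * f 1 * ⋯ * f (k-1)` of length `k` with every factor in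
`S`. -/
def wordSet {G : Type*} [Monoid G] (S : Set G) (k : ℕ) : Set G :=
  { U | ∃ f : Fin k → G, (∀ i, f i ∈ S) ∧ U = (List.ofFn f).prod }

/-- There is a transcendental number on the unit circle. -/
theorem exists_transcendental_circle : ∃ z : Circle, ¬ IsAlgebraic ℚ (z : ℂ) := by
  by_contra! h
  have hc : Set.Countable { x : ℂ | IsAlgebraic ℚ x } := Algebraic.countable ℚ ℂ
  have h2 : (Set.univ : Set Circle).Countable := by
    have := hc.preimage_of_injOn (f := fun z : Circle => (z : ℂ)) Circle.coe_injective.injOn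
    exact this.mono (fun z _ => h z)
  have h3 : (Set.Ioc (-Real.pi) Real.pi).Countable := by
    have : Countable Circle := Set.countable_univ_iff.1 h2
    exact Set.countable_coe_iff.1 (Circle.argEquiv.symm.injective.countable)
  have := Cardinal.mk_Ioc_real (a := -Real.pi) (b := Real.pi) (by linarith [Real.pi_pos])
  rw [← Cardinal.le_aleph0_iff_set_countable, this] at h3
  exact absurd h3 (not_le.2 Cardinal.aleph0_lt_continuum)

/-- A closed subgroup containing the image of an element of infinite order under a continuous
homomorphism from the circle contains the whole image. -/
theorem circle_hom_mem {G : Type*} [Group G] [TopologicalSpace G] (K : Subgroup G)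
    (hK : IsClosed (K : Set G)) (f : Circle →* G) (hf : Continuous f) (z : Circle)
    (hz : ∀ n : ℕ, 0 < n → z ^ n ≠ 1) (hzK : f z ∈ K) (c : Circle) : f c ∈ K := by
  obtain ⟨t, rfl⟩ := Circle.exp_surjective z
  obtain ⟨s, rfl⟩ := Circle.exp_surjective c
  have hirr : Irrational (t / (2 * Real.pi)) := by
    rintro ⟨r, hr⟩
    apply hz r.den r.den_pos
    have hpi := Real.pi_pos
    have h1 : (r.den : ℝ) * t = (r.num : ℝ) * (2 * Real.pi) := by
      have h2 : (r : ℝ) = r.num / r.den := Rat.cast_def r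
      have h3 : (r.den : ℝ) ≠ 0 := by exact_mod_cast r.den_ne_zero
      rw [h2] at hr
      field_simp at hr
      linarith
    rw [← Circle.exp_natCast_mul, h1, Circle.exp_intCast_mul, Circle.exp_two_pi, _root_.one_zpow]
  have hd := dense_addSubgroupClosure_pair_iff.2 hirr
  have hcl : IsClosed {x : ℝ | f (Circle.exp x) ∈ K} :=
    hK.preimage (hf.comp Circle.exp.continuous)
  have hsub : (AddSubgroup.closure {t, 2 * Real.pi} : Set ℝ) ⊆ {x : ℝ | f (Circle.exp x) ∈ K} := by
    intro x hx
    refine AddSubgroup.closure_induction (p := fun x _ => f (Circle.exp x) ∈ K)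
      ?_ ?_ ?_ ?_ hx
    · rintro y (rfl | rfl)
      · exact hzK
      · rw [Circle.exp_two_pi, map_one]; exact K.one_mem
    · rw [Circle.exp_zero, map_one]; exact K.one_mem
    · intro x y _ _ hx hy
      rw [Circle.exp_add, map_mul]; exact K.mul_mem hx hy
    · intro x _ hx
      rw [Circle.exp_neg, map_inv]; exact K.inv_mem hx
  have := hcl.closure_subset_iff.2 hsub (hd s)
  exact this

/-- Phase on coordinate `i`. -/
def phaseMat (i : Fin 4) (c : ℂ) : Matrix (Fin 4) (Fin 4) ℂ :=
  fun p q => if p = q then (if p = i then c else 1) else 0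

theorem phaseMat_mul (i : Fin 4) (c : ℂ) (A : Matrix (Fin 4) (Fin 4) ℂ) (p q : Fin 4) :
    (phaseMat i c * A) p q = if p = i then c * A p q else A p q := by
  simp [Matrix.mul_apply, phaseMat]

theorem phaseMat_det (i : Fin 4) (c : ℂ) : (phaseMat i c).det = c := by
  have : phaseMat i c = Matrix.diagonal (fun p => if p = i then c else 1) := by
    ext p q; simp [phaseMat, Matrix.diagonal_apply]
  rw [this, Matrix.det_diagonal]
  simp

/-- Rotation in the plane of coordinates `j` and `l`. -/
def rotMat (j l : Fin 4) (c : ℂ) : Matrix (Fin 4) (Fin 4) ℂ :=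
  fun p q => if p = j then (if q = j then (c.re : ℂ) else if q = l then (c.im : ℂ) else 0)
    else if p = l then (if q = j then -(c.im : ℂ) else if q = l then (c.re : ℂ) else 0)
    else if p = q then 1 else 0

theorem rotMat_mul (j l : Fin 4) (h : j ≠ l) (c : ℂ) (A : Matrix (Fin 4) (Fin 4) ℂ)
    (p q : Fin 4) :
    (rotMat j l c * A) p q = if p = j then c.re * A j q + c.im * A l q
      else if p = l then -c.im * A j q + c.re * A l q else A p q := by
  simp only [Matrix.mul_apply, rotMat]
  have key : ∀ a b : ℂ, ∑ x, (if x = j then a else if x = l then b else 0) * A x q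
      = a * A j q + b * A l q := by
    intro a b
    have : ∀ x, (if x = j then a else if x = l then b else 0) * A x q
      = (if x = j then a * A j q else 0) + (if x = l then b * A l q else 0) := by
      intro x
      by_cases h1 : x = j
      · subst h1; simp [h]
      · by_cases h2 : x = l
        · subst h2; simp [h1]
        · simp [h1, h2]
    simp only [this, Finset.sum_add_distrib]
    simp
  split_ifs
  · exact key _ _
  · exact key _ _
  · simp

theorem phaseMat_mul_phaseMat (i : Fin 4) (c d : ℂ) :
    phaseMat i c * phaseMat i d = phaseMat i (c * d) := by
  ext p q
  rw [phaseMat_mul]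
  simp only [phaseMat]
  split_ifs <;> simp

theorem rotMat_mul_rotMat (j l : Fin 4) (h : j ≠ l) (c d : ℂ) :
    rotMat j l c * rotMat j l d = rotMat j l (c * d) := by
  ext p q
  rw [rotMat_mul j l h]
  simp only [rotMat, Complex.mul_re, Complex.mul_im]
  have h' := h.symm
  split_ifs <;> simp_all <;> ring

theorem phaseMat_one (i : Fin 4) : phaseMat i 1 = 1 := by
  ext p q; simp [phaseMat, Matrix.one_apply]

theorem rotMat_one (j l : Fin 4) (h : j ≠ l) : rotMat j l 1 = 1 := by
  ext p q
  simp only [rotMat, Matrix.one_apply, Complex.one_re, Complex.one_im]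
  split_ifs <;> simp_all

theorem phaseMat_star (i : Fin 4) (c : Circle) :
    star (phaseMat i c) = phaseMat i ((c⁻¹ : Circle) : ℂ) := by
  ext p q
  rw [Circle.coe_inv_eq_conj, Matrix.star_apply]
  simp only [phaseMat]
  split_ifs <;> simp_all

theorem rotMat_star (j l : Fin 4) (h : j ≠ l) (c : Circle) :
    star (rotMat j l c) = rotMat j l ((c⁻¹ : Circle) : ℂ) := by
  ext p q
  rw [Circle.coe_inv_eq_conj, Matrix.star_apply]
  simp only [rotMat, Complex.conj_re, Complex.conj_im]
  by_cases p1 : p = j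
  · subst p1
    by_cases q1 : q = p
    · subst q1; simp
    · by_cases q2 : q = l
      · subst q2; simp [q1, h]
      · have := Ne.symm q1
        simp [q1, q2, h]
  · by_cases p2 : p = l
    · subst p2
      by_cases q1 : q = j
      · subst q1; simp [p1, h]
      · by_cases q2 : q = p
        · subst q2; simp [p1]
        · simp [q1, q2, p1]
    · by_cases q1 : q = j
      · subst q1; simp [p1, p2, h, Ne.symm p1]
      · by_cases q2 : q = l
        · subst q2; simp [q1, p1, p2]
        · simp [q1, q2, p1, p2, eq_comm, apply_ite (starRingEnd ℂ)]

theorem rotMat_transpose (j l : Fin 4) (h : j ≠ l) (c : Circle) :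
    (rotMat j l c).transpose = rotMat j l ((c⁻¹ : Circle) : ℂ) := by
  ext p q
  rw [Circle.coe_inv_eq_conj, Matrix.transpose_apply]
  simp only [rotMat, Complex.conj_re, Complex.conj_im]
  by_cases p1 : p = j
  · subst p1
    by_cases q1 : q = p
    · subst q1; simp
    · by_cases q2 : q = l
      · subst q2; simp [q1, h]
      · have := Ne.symm q1
        simp [q1, q2, h]
  · by_cases p2 : p = l
    · subst p2
      by_cases q1 : q = j
      · subst q1; simp [p1, h]
      · by_cases q2 : q = p
        · subst q2; simp [p1]
        · simp [q1, q2, p1]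
    · by_cases q1 : q = j
      · subst q1; simp [p1, p2, h, Ne.symm p1]
      · by_cases q2 : q = l
        · subst q2; simp [q1, p1, p2]
        · simp [q1, q2, p1, p2, eq_comm, apply_ite (starRingEnd ℂ)]

/-- Phases as a homomorphism from the circle. -/
def phaseU (i : Fin 4) : Circle →* Matrix.unitaryGroup (Fin 4) ℂ where
  toFun c := ⟨phaseMat i c, by
    rw [Matrix.mem_unitaryGroup_iff, phaseMat_star, phaseMat_mul_phaseMat, ← Circle.coe_mul,
      mul_inv_cancel, Circle.coe_one, phaseMat_one]⟩
  map_one' := Subtype.ext (phaseMat_one i)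
  map_mul' c d := Subtype.ext (phaseMat_mul_phaseMat i c d).symm

/-- Rotations as a homomorphism from the circle. -/
def rotU (j l : Fin 4) (h : j ≠ l) : Circle →* Matrix.unitaryGroup (Fin 4) ℂ where
  toFun c := ⟨rotMat j l c, by
    rw [Matrix.mem_unitaryGroup_iff, rotMat_star j l h, rotMat_mul_rotMat j l h,
      ← Circle.coe_mul, mul_inv_cancel, Circle.coe_one, rotMat_one j l h]⟩
  map_one' := Subtype.ext (rotMat_one j l h)
  map_mul' c d := Subtype.ext (rotMat_mul_rotMat j l h c d).symm

theorem continuous_phaseU (i : Fin 4) : Continuous (phaseU i) := by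
  refine Continuous.subtype_mk ?_ _
  refine continuous_matrix fun p q => ?_
  simp only [phaseMat]
  split_ifs <;> fun_prop

theorem continuous_rotU (j l : Fin 4) (h : j ≠ l) : Continuous (rotU j l h) := by
  refine Continuous.subtype_mk ?_ _
  refine continuous_matrix fun p q => ?_
  simp only [rotMat]
  split_ifs <;> fun_prop

theorem rotMat_det_sq (j l : Fin 4) (h : j ≠ l) (c : Circle) :
    (rotMat j l c).det ^ 2 = 1 := by
  have h1 : (rotMat j l c).det = (rotMat j l ((c⁻¹ : Circle) : ℂ)).det := by
    rw [← rotMat_transpose j l h, Matrix.det_transpose]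
  rw [sq]
  nth_rewrite 2 [h1]
  rw [← Matrix.det_mul, rotMat_mul_rotMat j l h, ← Circle.coe_mul, mul_inv_cancel,
    Circle.coe_one, rotMat_one j l h, Matrix.det_one]

/-- Any complex number is turned into its norm by a unit phase. -/
theorem exists_phase (x : ℂ) : ∃ c : Circle, (c : ℂ) * x = (‖x‖ : ℂ) := by
  obtain ⟨c, hc⟩ : ∃ c : Circle, x = c * (‖x‖ : ℂ) := by
    refine ⟨Circle.exp x.arg, ?_⟩
    rw [Circle.coe_exp, mul_comm]
    exact (Complex.norm_mul_exp_arg_mul_I x).symm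
  refine ⟨c⁻¹, ?_⟩
  nth_rewrite 1 [hc]
  rw [Circle.coe_inv, inv_mul_cancel_left₀ c.coe_ne_zero]

/-- One Givens elimination step. -/
theorem givens_step (K : Subgroup (Matrix.unitaryGroup (Fin 4) ℂ))
    (hD : ∀ i c, phaseU i c ∈ K) (hR : ∀ j l (h : j ≠ l) c, rotU j l h c ∈ K)
    (j l : Fin 4) (h : j ≠ l) (A : Matrix (Fin 4) (Fin 4) ℂ) (q : Fin 4) :
    ∃ g ∈ K, ((g : Matrix (Fin 4) (Fin 4) ℂ) * A) l q = 0 ∧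
      (∀ p r, p ≠ j → p ≠ l → ((g : Matrix (Fin 4) (Fin 4) ℂ) * A) p r = A p r) ∧
      (∀ r, A j r = 0 → A l r = 0 → ∀ p, ((g : Matrix (Fin 4) (Fin 4) ℂ) * A) p r = A p r) := by
  obtain ⟨c, hc⟩ := exists_phase (A j q)
  obtain ⟨d, hd⟩ := exists_phase (A l q)
  obtain ⟨e, he⟩ : ∃ e : Circle, -((e : ℂ).im : ℂ) * (‖A j q‖ : ℂ) + ((e : ℂ).re : ℂ) * ‖A l q‖
      = 0 := by
    set w : ℂ := ⟨‖A j q‖, ‖A l q‖⟩ with hw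
    refine ⟨Circle.exp w.arg, ?_⟩
    have h1 := Complex.norm_mul_exp_arg_mul_I w
    rw [← Circle.coe_exp] at h1
    have hre := congrArg Complex.re h1
    have him := congrArg Complex.im h1
    rw [Complex.re_ofReal_mul] at hre
    rw [Complex.im_ofReal_mul] at him
    have e1 : w.re = ‖A j q‖ := rfl
    have e2 : w.im = ‖A l q‖ := rfl
    rw [← e1, ← e2, ← hre, ← him]
    push_cast
    ring
  refine ⟨rotU j l h e * (phaseU j c * phaseU l d),
    K.mul_mem (hR _ _ _ _) (K.mul_mem (hD _ _) (hD _ _)), ?_⟩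
  have key : ∀ p r, (((rotU j l h e * (phaseU j c * phaseU l d) :
      Matrix.unitaryGroup (Fin 4) ℂ) : Matrix (Fin 4) (Fin 4) ℂ) * A) p r =
      if p = j then ((e : ℂ).re : ℂ) * (c * A j r) + ((e : ℂ).im : ℂ) * (d * A l r)
      else if p = l then -((e : ℂ).im : ℂ) * (c * A j r) + ((e : ℂ).re : ℂ) * (d * A l r)
      else A p r := by
    intro p r
    change ((rotMat j l e * (phaseMat j c * phaseMat l d)) * A) p r = _
    rw [Matrix.mul_assoc, Matrix.mul_assoc, rotMat_mul j l h]
    simp only [phaseMat_mul]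
    have h' := h.symm
    split_ifs <;> simp_all
  refine ⟨?_, ?_, ?_⟩
  · rw [key, if_neg h.symm, if_pos rfl, hc, hd, he]
  · intro p r h1 h2
    rw [key, if_neg h1, if_neg h2]
  · intro r h1 h2 p
    rw [key]
    split_ifs with h3 h4
    · subst h3; simp [h1, h2]
    · subst h4; simp [h1, h2]
    · rfl

/-- If a unitary has a diagonal entry equal to one then its row is a unit vector. -/
theorem row_of_diag_one (U : Matrix.unitaryGroup (Fin 4) ℂ) (i : Fin 4)
    (h : (U : Matrix (Fin 4) (Fin 4) ℂ) i i = 1) (q : Fin 4) (hq : q ≠ i) :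
    (U : Matrix (Fin 4) (Fin 4) ℂ) i q = 0 := by
  have h1 := congrFun (congrFun (Matrix.mem_unitaryGroup_iff.1 U.2) i) i
  rw [Matrix.mul_apply, Matrix.one_apply_eq] at h1
  simp only [Matrix.star_apply, RCLike.star_def, Complex.mul_conj] at h1
  have h2 : ∑ x, Complex.normSq ((U : Matrix (Fin 4) (Fin 4) ℂ) i x) = 1 := by
    exact_mod_cast h1
  rw [← Finset.add_sum_erase _ _ (Finset.mem_univ i), h] at h2
  have h3 : ∑ x ∈ Finset.univ.erase i,
      Complex.normSq ((U : Matrix (Fin 4) (Fin 4) ℂ) i x) = 0 := by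
    simpa using h2
  rw [Finset.sum_eq_zero_iff_of_nonneg (fun _ _ => Complex.normSq_nonneg _)] at h3
  exact Complex.normSq_eq_zero.1 (h3 q (by simp [hq]))

/-- Phases and rotations generate the unitary group. -/
theorem mem_of_phase_rot (K : Subgroup (Matrix.unitaryGroup (Fin 4) ℂ))
    (hD : ∀ i c, phaseU i c ∈ K) (hR : ∀ j l (h : j ≠ l) c, rotU j l h c ∈ K)
    (U : Matrix.unitaryGroup (Fin 4) ℂ) : U ∈ K := by
  have main : ∀ m : ℕ, m ≤ 4 → ∃ h ∈ K, ∀ i : Fin 4, i.val < m → ∀ p,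
      ((h * U : Matrix.unitaryGroup (Fin 4) ℂ) : Matrix (Fin 4) (Fin 4) ℂ) p i =
        if p = i then 1 else 0 := by
    intro m
    induction m with
    | zero => exact fun _ => ⟨1, K.one_mem, fun i hi => absurd hi (by omega)⟩
    | succ m ih =>
      intro hm
      obtain ⟨h, hK, hh⟩ := ih (by omega)
      obtain ⟨j, hj⟩ : ∃ j : Fin 4, j.val = m := ⟨⟨m, by omega⟩, rfl⟩
      have elim : ∀ s : Finset (Fin 4), (∀ l ∈ s, m < l.val) → ∃ h ∈ K,
          (∀ i : Fin 4, i.val < m → ∀ p,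
          ((h * U : Matrix.unitaryGroup (Fin 4) ℂ) : Matrix (Fin 4) (Fin 4) ℂ) p i =
            if p = i then 1 else 0) ∧ ∀ l ∈ s,
          ((h * U : Matrix.unitaryGroup (Fin 4) ℂ) : Matrix (Fin 4) (Fin 4) ℂ) l j = 0 := by
        intro s
        induction s using Finset.induction_on with
        | empty => exact fun _ => ⟨h, hK, hh, by simp⟩
        | insert l s hl ihs =>
          intro hs
          obtain ⟨h1, h1K, h1a, h1b⟩ := ihs (fun l hl => hs l (Finset.mem_insert_of_mem hl))
          have hlm : m < l.val := hs l (Finset.mem_insert_self _ _)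
          have hjl : j ≠ l := by rintro rfl; omega
          obtain ⟨g, gK, ga, gb, gc⟩ := givens_step K hD hR j l hjl
            ((h1 * U : Matrix.unitaryGroup (Fin 4) ℂ) : Matrix (Fin 4) (Fin 4) ℂ) j
          refine ⟨g * h1, K.mul_mem gK h1K, ?_, ?_⟩
          · intro i hi p
            rw [mul_assoc]
            refine Eq.trans (gc i ?_ ?_ p) (h1a i hi p)
            · rw [h1a i hi, if_neg]; rintro rfl; omega
            · rw [h1a i hi, if_neg]; rintro rfl; omega
          · intro p hp
            rw [mul_assoc]
            rcases Finset.mem_insert.1 hp with rfl | hps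
            · exact ga
            · refine Eq.trans (gb p j ?_ ?_) (h1b p hps)
              · rintro rfl
                have := hs p hp
                omega
              · rintro rfl; exact hl hps
      obtain ⟨h1, h1K, h1a, h1b⟩ := elim (Finset.univ.filter fun l => m < l.val) (by simp)
      set V := h1 * U with hV
      have hcol : ∀ p, p ≠ j → (V : Matrix (Fin 4) (Fin 4) ℂ) p j = 0 := by
        intro p hp
        rcases lt_trichotomy p.val m with hlt | heq | hgt
        · exact row_of_diag_one V p (by rw [h1a p hlt, if_pos rfl]) j hp.symm
        · exact absurd (Fin.ext (heq.trans hj.symm)) hp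
        · exact h1b p (by simp [hgt])
      have hnorm : ‖(V : Matrix (Fin 4) (Fin 4) ℂ) j j‖ = 1 := by
        have e := congrFun (congrFun (Matrix.mem_unitaryGroup_iff'.1 V.2) j) j
        rw [Matrix.mul_apply, Matrix.one_apply_eq, Finset.sum_eq_single j
          (fun p _ hp => by rw [hcol p hp, mul_zero]) (by simp), Matrix.star_apply,
          RCLike.star_def, Complex.conj_mul'] at e
        have e' : ‖(V : Matrix (Fin 4) (Fin 4) ℂ) j j‖ ^ 2 = 1 := by exact_mod_cast e
        exact (pow_eq_one_iff_of_nonneg (norm_nonneg _) two_ne_zero).1 e'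
      obtain ⟨c, hc⟩ := exists_phase ((V : Matrix (Fin 4) (Fin 4) ℂ) j j)
      rw [hnorm] at hc
      refine ⟨phaseU j c * h1, K.mul_mem (hD _ _) h1K, ?_⟩
      intro i hi p
      rw [mul_assoc, ← hV]
      change (phaseMat j c * (V : Matrix (Fin 4) (Fin 4) ℂ)) p i = _
      rw [phaseMat_mul]
      rcases Nat.lt_succ_iff_lt_or_eq.1 hi with hi | hi
      · rw [h1a i hi]
        have hij : j ≠ i := by rintro rfl; omega
        split_ifs <;> simp_all
      · have : i = j := Fin.ext (hi.trans hj.symm)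
        subst this
        by_cases hp : p = i
        · subst hp; simp [hc]
        · simp [hp, hcol p hp]
  obtain ⟨h, hK, hh⟩ := main 4 le_rfl
  have : h * U = 1 := by
    apply Matrix.UnitaryGroup.ext
    intro p i
    exact (hh i i.2 p).trans (by simp [Matrix.one_apply])
  rw [eq_inv_of_mul_eq_one_right this]
  exact K.inv_mem hK

theorem isAlgebraic_det (A : Matrix (Fin 4) (Fin 4) ℂ) (h : ∀ i j, IsAlgebraic ℚ (A i j)) :
    IsAlgebraic ℚ A.det := by
  have h' : ∀ i j, A i j ∈ algebraicClosure ℚ ℂ := fun i j => mem_algebraicClosure_iff.2 (h i j)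
  have : A.det ∈ algebraicClosure ℚ ℂ := by
    rw [Matrix.det_apply']
    exact sum_mem fun σ _ => mul_mem (intCast_mem _ _) (prod_mem fun i _ => h' _ _)
  exact mem_algebraicClosure_iff.1 this

/-- The determinant of a word. -/
theorem det_word (z : ℂ) (S T : Set (Matrix.unitaryGroup (Fin 4) ℂ))
    (hS : ∀ U ∈ S, IsAlgebraic ℚ (U : Matrix (Fin 4) (Fin 4) ℂ).det)
    (hT : ∀ U ∈ T, ∃ a : ℂ, IsAlgebraic ℚ a ∧ (U : Matrix (Fin 4) (Fin 4) ℂ).det = z * a)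
    (L : List (Matrix.unitaryGroup (Fin 4) ℂ)) (hL : ∀ x ∈ L, x ∈ S ∪ T) :
    ∃ (m : ℕ) (a : ℂ), IsAlgebraic ℚ a ∧
      (L.prod : Matrix (Fin 4) (Fin 4) ℂ).det = z ^ m * a ∧ (m = 0 → ∀ x ∈ L, x ∈ S) := by
  induction L with
  | nil => exact ⟨0, 1, isAlgebraic_one, by simp, by simp⟩
  | cons x L ih =>
    obtain ⟨m, a, ha, hd, hm⟩ := ih fun y hy => hL y (List.mem_cons_of_mem _ hy)
    have hx : x ∈ S ∪ T := hL x List.mem_cons_self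
    have hp : ((x :: L).prod : Matrix (Fin 4) (Fin 4) ℂ).det =
        (x : Matrix (Fin 4) (Fin 4) ℂ).det * (L.prod : Matrix (Fin 4) (Fin 4) ℂ).det := by
      rw [List.prod_cons, Matrix.UnitaryGroup.mul_val, Matrix.det_mul]
    by_cases hxS : x ∈ S
    · refine ⟨m, _, (hS x hxS).mul ha, by rw [hp, hd]; ring, fun h0 y hy => ?_⟩
      rcases List.mem_cons.1 hy with rfl | hy
      · exact hxS
      · exact hm h0 y hy
    · obtain ⟨b, hb, hxb⟩ := hT x (hx.resolve_left hxS)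
      exact ⟨m + 1, _, hb.mul ha, by rw [hp, hd, hxb]; ring, fun h0 => by omega⟩

theorem not_alg_pow_mul {z a : ℂ} (hz : ¬ IsAlgebraic ℚ z) {m : ℕ} (hm : m ≠ 0)
    (ha : IsAlgebraic ℚ a) (ha0 : z ^ m * a ≠ 0) : ¬ IsAlgebraic ℚ (z ^ m * a) := by
  intro h
  have ha' : a ≠ 0 := right_ne_zero_of_mul ha0
  have h1 : IsAlgebraic ℚ (z ^ m) := by
    have := h.mul ha.inv
    rwa [mul_assoc, mul_inv_cancel₀ ha', mul_one] at this
  exact hz (h1.of_pow (Nat.pos_of_ne_zero hm))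

/-- Theorem 2 of the paper: for every `k ≥ 1` and every finite nonempty
`U_M ⊂ U(4)` that is closed under inverses and consists of matrices with entries algebraic
over `ℚ`, there is a finite set `U_{B/M} ⊂ U(4)`, disjoint from `U_M`, such that
`U_B = U_M ∪ U_{B/M}` generates a dense subgroup of `U(4)` (so `U_B` is a partially
invertible universal set) and the relaxed seed `𝒰^k = 𝒰_{B^k} ∖ 𝒰_{M^k}` satisfies:
(a) some element of `𝒰^k` has a matrix entry that is not algebraic over `ℚ`, and
(b) no element of `𝒰^k` has its inverse (= conjugate transpose) in `𝒰^k`. -/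
theorem relaxed_seed_exists
    (k : ℕ) (hk : 1 ≤ k)
    (UM : Finset (Matrix.unitaryGroup (Fin 4) ℂ)) (hMne : UM.Nonempty)
    (hMinv : ∀ U ∈ UM, U⁻¹ ∈ UM)
    (hMalg : ∀ U ∈ UM, ∀ i j, IsAlgebraic ℚ ((U : Matrix (Fin 4) (Fin 4) ℂ) i j)) :
    ∃ UBM : Finset (Matrix.unitaryGroup (Fin 4) ℂ),
      Disjoint UM UBM ∧ UBM.Nonempty ∧
      Dense ((Subgroup.closure ((↑UM ∪ ↑UBM : Set (Matrix.unitaryGroup (Fin 4) ℂ))) :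
          Subgroup (Matrix.unitaryGroup (Fin 4) ℂ)) :
            Set (Matrix.unitaryGroup (Fin 4) ℂ)) ∧
      (∃ U ∈ wordSet (↑UM ∪ ↑UBM : Set (Matrix.unitaryGroup (Fin 4) ℂ)) k \
            wordSet (↑UM : Set (Matrix.unitaryGroup (Fin 4) ℂ)) k,
        ∃ i j, ¬ IsAlgebraic ℚ ((U : Matrix (Fin 4) (Fin 4) ℂ) i j)) ∧
      (∀ U ∈ wordSet (↑UM ∪ ↑UBM : Set (Matrix.unitaryGroup (Fin 4) ℂ)) k \
            wordSet (↑UM : Set (Matrix.unitaryGroup (Fin 4) ℂ)) k,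
        ∀ U' ∈ wordSet (↑UM ∪ ↑UBM : Set (Matrix.unitaryGroup (Fin 4) ℂ)) k \
            wordSet (↑UM : Set (Matrix.unitaryGroup (Fin 4) ℂ)) k,
          U' ≠ U⁻¹) := by
  obtain ⟨z, hz⟩ := exists_transcendental_circle
  have hzpow : ∀ n : ℕ, 0 < n → z ^ n ≠ 1 := by
    intro n hn h
    apply hz
    refine IsAlgebraic.of_pow hn ?_
    rw [← Circle.coe_pow, h, Circle.coe_one]
    exact isAlgebraic_one
  set T : Finset (Matrix.unitaryGroup (Fin 4) ℂ) :=
    (Finset.univ.image fun i => phaseU i z) ∪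
      (Finset.univ.image fun p : {p : Fin 4 × Fin 4 // p.1 ≠ p.2} =>
        phaseU p.1.1 z * rotU p.1.1 p.1.2 p.2 z) with hTdef
  have hDT : ∀ i, phaseU i z ∈ T := fun i => by simp [hTdef]
  have hRT : ∀ j l (h : j ≠ l), phaseU j z * rotU j l h z ∈ T := fun j l h =>
    Finset.mem_union_right _ (Finset.mem_image.2 ⟨⟨(j, l), h⟩, Finset.mem_univ _, rfl⟩)
  have hS : ∀ U ∈ (↑UM : Set (Matrix.unitaryGroup (Fin 4) ℂ)),
      IsAlgebraic ℚ (U : Matrix (Fin 4) (Fin 4) ℂ).det :=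
    fun U hU => isAlgebraic_det _ (hMalg U hU)
  have hT : ∀ U ∈ (↑T : Set (Matrix.unitaryGroup (Fin 4) ℂ)), ∃ a : ℂ, IsAlgebraic ℚ a ∧
      (U : Matrix (Fin 4) (Fin 4) ℂ).det = z * a := by
    intro U hU
    rcases Finset.mem_union.1 (Finset.mem_coe.1 hU) with h | h
    · obtain ⟨i, -, rfl⟩ := Finset.mem_image.1 h
      exact ⟨1, isAlgebraic_one, (phaseMat_det i z).trans (mul_one _).symm⟩
    · obtain ⟨⟨⟨j, l⟩, hjl⟩, -, rfl⟩ := Finset.mem_image.1 h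
      refine ⟨(rotMat j l z).det, ?_, ?_⟩
      · refine IsAlgebraic.of_pow (n := 2) (by norm_num) ?_
        rw [rotMat_det_sq j l hjl]
        exact isAlgebraic_one
      · change (phaseMat j z * rotMat j l z).det = _
        rw [Matrix.det_mul, phaseMat_det]
  have hne : ∀ U : Matrix.unitaryGroup (Fin 4) ℂ, (U : Matrix (Fin 4) (Fin 4) ℂ).det ≠ 0 :=
    fun U => (Matrix.UnitaryGroup.det_isUnit U).ne_zero
  have hword : ∀ U ∈ wordSet (↑UM ∪ ↑T : Set (Matrix.unitaryGroup (Fin 4) ℂ)) k \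
      wordSet (↑UM : Set (Matrix.unitaryGroup (Fin 4) ℂ)) k, ∃ (m : ℕ) (a : ℂ), m ≠ 0 ∧
      IsAlgebraic ℚ a ∧ (U : Matrix (Fin 4) (Fin 4) ℂ).det = z ^ m * a := by
    rintro U ⟨⟨f, hf, rfl⟩, hU⟩
    obtain ⟨m, a, ha, hd, hm⟩ := det_word z _ _ hS hT (List.ofFn f) (by
      intro x hx
      obtain ⟨i, rfl⟩ := (List.mem_ofFn' _ _).1 hx
      exact hf i)
    refine ⟨m, a, fun h0 => hU ⟨f, fun i => hm h0 _ ?_, rfl⟩, ha, hd⟩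
    exact (List.mem_ofFn' _ _).2 ⟨i, rfl⟩
  refine ⟨T, ?_, ⟨_, hDT 0⟩, ?_, ?_, ?_⟩
  · rw [Finset.disjoint_left]
    intro U hU hUT
    obtain ⟨a, ha, hd⟩ := hT U hUT
    have h1 := hS U hU
    have h2 := hne U
    rw [hd, ← pow_one (z : ℂ)] at h1 h2
    exact not_alg_pow_mul hz one_ne_zero ha h2 h1
  · set H := Subgroup.closure (↑UM ∪ ↑T : Set (Matrix.unitaryGroup (Fin 4) ℂ)) with hH
    have hTH : ∀ x ∈ T, x ∈ H.topologicalClosure := fun x hx =>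
      H.le_topologicalClosure (Subgroup.subset_closure (Or.inr hx))
    have hcl := H.isClosed_topologicalClosure
    have hD : ∀ i c, phaseU i c ∈ H.topologicalClosure := fun i c =>
      circle_hom_mem _ hcl _ (continuous_phaseU i) z hzpow (hTH _ (hDT i)) c
    have hR : ∀ j l (h : j ≠ l) c, rotU j l h c ∈ H.topologicalClosure := fun j l h c =>
      circle_hom_mem _ hcl _ (continuous_rotU j l h) z hzpow
        ((Subgroup.mul_mem_cancel_left _ (hD j z)).1 (hTH _ (hRT j l h))) c
    intro U
    exact mem_of_phase_rot _ hD hR U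
  · have hdet : ((phaseU 0 z ^ k : Matrix.unitaryGroup (Fin 4) ℂ) :
        Matrix (Fin 4) (Fin 4) ℂ).det = (z : ℂ) ^ k := by
      rw [← map_pow]
      exact (phaseMat_det 0 _).trans (Circle.coe_pow z k)
    have hnalg : ¬ IsAlgebraic ℚ ((z : ℂ) ^ k) := fun h => hz (h.of_pow hk)
    refine ⟨phaseU 0 z ^ k, ⟨⟨fun _ => phaseU 0 z, fun _ => Or.inr (hDT 0), by simp⟩, ?_⟩, ?_⟩
    · rintro ⟨f, hf, hU⟩
      obtain ⟨m, a, ha, hd, hm⟩ := det_word 1 (↑UM) ∅ hS (by simp) (List.ofFn f) (by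
        intro x hx
        obtain ⟨i, rfl⟩ := (List.mem_ofFn' _ _).1 hx
        exact Or.inl (hf i))
      rw [← hU, hdet, one_pow, one_mul] at hd
      exact hnalg (hd ▸ ha)
    · by_contra! hall
      exact hnalg (hdet ▸ isAlgebraic_det _ hall)
  · intro U hU U' hU' heq
    obtain ⟨m, a, hm, ha, hd⟩ := hword U hU
    obtain ⟨m', a', hm', ha', hd'⟩ := hword U' hU'
    have h1 : (U' : Matrix (Fin 4) (Fin 4) ℂ).det * (U : Matrix (Fin 4) (Fin 4) ℂ).det = 1 := by
      rw [← Matrix.det_mul, ← Matrix.UnitaryGroup.mul_val, heq, inv_mul_cancel]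
      simp
    have h2 : (z : ℂ) ^ (m' + m) * (a' * a) = 1 := by
      rw [← h1, hd, hd']; ring
    refine not_alg_pow_mul hz (m := m' + m) (by omega) (ha'.mul ha) ?_ ?_
    · rw [h2]; exact one_ne_zero
    · rw [h2]; exact isAlgebraic_one


end
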